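/- Assume additionally that ξ⁰ = 0 and ξᴹ = 1, that the interpolatory quadrature at the nodes is exact to degree 2M−1 (Σ_{m} w_m p(ξᵐ) = ∫₀¹ p for every polynomial p of degree ≤ 2M−1, i.e. the nodes are the Gauss–Lobatto points), and that B is invertible. If A′ is any real (M+1)×(M+1) matrix satisfying the Lobatto IIIC conditions A′_{i,0} = w₀ for all i, and Σ_{j=0}^{M} A′_{ij}·(ξʲ)^{z−1} = (ξⁱ)^z / z for all i and all z with 1 ≤ z ≤ M, then A′ = B⁻¹·diag(w₀,…,w_M). In other words, the Runge–Kutta matrix of the ADER method with Gauss–Lobatto subtimenodes and nodal quadrature is the unique matrix satisfying the Lobatto IIIC characterization, so the ADER-RK Gauss–Lobatto method coincides with the Lobatto IIIC method. -/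

import Mathlib

/-!
Integration by parts turns the ADER bilinear form `p(1)q(1) - ∫ p'q` into `p(0)q(0) + ∫ pq'`.
Tested against a Lagrange basis polynomial `ψˡ`, the product `ψˡq'` has degree at most `2M - 1`, so
nodal quadrature integrates it exactly, to `w_l q'(ξˡ)`. As `ξ⁰ = 0`, this says that on nodal values
`B q = q(0) e₀ + diag(w) q'`. For `q = 1` it gives `B 1 = e₀`, for `q = xᶻ / z` it gives
`B (xᶻ / z) = diag(w) xᶻ⁻¹`, so the Lobatto IIIC conditions say precisely that `B A'` and `diag(w)`
agree on the vectors `e₀, 1, ξ, …, ξᴹ⁻¹`. These span by Vandermonde on the nonzero nodes.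

The same identity makes `B` invertible. The weights of the nonzero nodes do not vanish, as is seen
by integrating `x ∏_{m ≠ 0, l} (x - ξᵐ)²`, so `B q = 0` makes `q'` vanish at `M` nodes; then `q'`
is zero, and so is `q(0)`.
-/

section ADER

open Polynomial Finset Matrix

/-- The bilinear form `p(1)q(1) - ∫₀¹ p'q` of the ADER weak formulation of `d/dt` on `[0, 1]`, taken
linear in the trial polynomial `q` for each test polynomial `p`. -/
noncomputable def aderForm (p : ℝ[X]) : ℝ[X] →ₗ[ℝ] ℝ where
  toFun q := p.eval 1 * q.eval 1 - ∫ x in (0 : ℝ)..1, p.derivative.eval x * q.eval x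
  map_add' q r := by
    have h_int (r : ℝ[X]) : IntervalIntegrable (fun x ↦ p.derivative.eval x * r.eval x)
        MeasureTheory.volume 0 1 := Continuous.intervalIntegrable (by fun_prop) _ _
    simp only [eval_add, mul_add, intervalIntegral.integral_add (h_int q) (h_int r)]
    ring
  map_smul' c q := by
    simp only [eval_smul, smul_eq_mul, mul_left_comm _ c, intervalIntegral.integral_const_mul,
      RingHom.id_apply, mul_sub]

/-- The ADER matrix `B` of the nodes `ξ`: the matrix of `aderForm` in their Lagrange basis. -/
noncomputable def aderMatrix {ι : Type*} [Fintype ι] [DecidableEq ι] (ξ : ι → ℝ) : Matrix ι ι ℝ :=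
  .of fun l m ↦ aderForm (Lagrange.basis univ ξ l) (Lagrange.basis univ ξ m)

/-- The quadrature rule on `[0, 1]` with nodes `ξ` and weights `w` integrates polynomials of degree
at most `d` exactly. -/
def ExactToDegree {ι : Type*} [Fintype ι] (ξ w : ι → ℝ) (d : ℕ) : Prop :=
  ∀ p : ℝ[X], p.natDegree ≤ d → ∑ m, w m * p.eval (ξ m) = ∫ x in (0 : ℝ)..1, p.eval x

/-- Butcher's simplifying condition `C(s)` for a Runge–Kutta matrix `A` with nodes `ξ`. -/
def SimplifyingC {ι : Type*} [Fintype ι] (ξ : ι → ℝ) (A : Matrix ι ι ℝ) (s : ℕ) : Prop :=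
  ∀ (i : ι) (z : ℕ), 1 ≤ z → z ≤ s → ∑ j, A i j * ξ j ^ (z - 1) = ξ i ^ z / (z : ℝ)

theorem aderForm_eq_eval_zero_add_integral (p q : ℝ[X]) :
    aderForm p q =
      p.eval 0 * q.eval 0 + ∫ x in (0 : ℝ)..1, (p * q.derivative).eval x := by
  have parts := intervalIntegral.integral_mul_deriv_eq_deriv_mul
    (fun x _ ↦ p.hasDerivAt x) (fun x _ ↦ q.hasDerivAt x)
    (p.derivative.continuous.intervalIntegrable 0 1)
    (q.derivative.continuous.intervalIntegrable 0 1)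
  simp only [eval_mul, parts, aderForm, LinearMap.coe_mk, AddHom.coe_mk]
  ring

theorem integral_eval_pos {p : ℝ[X]} {a b : ℝ} (hab : a < b) (hp : p ≠ 0)
    (h : ∀ x ∈ Set.Icc a b, 0 ≤ p.eval x) : 0 < ∫ x in a..b, p.eval x := by
  obtain ⟨c, hc, hpc⟩ : ∃ c ∈ Set.Icc a b, p.eval c ≠ 0 := by
    by_contra! hroots
    exact hp (p.eq_zero_of_infinite_isRoot ((Set.Icc_infinite hab).mono hroots))
  exact intervalIntegral.integral_pos hab p.continuous.continuousOn
    (fun x hx ↦ h x (Set.Ioc_subset_Icc_self hx)) ⟨c, hc, (h c hc).lt_of_ne' hpc⟩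

section LagrangeBasis

variable {ι : Type*} [Fintype ι] [DecidableEq ι]

theorem eval_lagrangeBasis_univ {K : Type*} [Field K] {ξ : ι → K} (hξ : ξ.Injective) (l m : ι) :
    (Lagrange.basis univ ξ l).eval (ξ m) = if l = m then 1 else 0 := by
  split_ifs with hlm
  · subst hlm
    exact Lagrange.eval_basis_self hξ.injOn (mem_univ l)
  · exact Lagrange.eval_basis_of_ne hlm (mem_univ m)

theorem eq_lagrangeBasis_univ {K : Type*} [Field K] {ξ : ι → K} (hξ : ξ.Injective) {p : K[X]}
    {l : ι} (hp : p.natDegree < Fintype.card ι)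
    (heval : ∀ m, p.eval (ξ m) = if l = m then 1 else 0) :
    p = Lagrange.basis univ ξ l := by
  refine eq_of_degrees_lt_of_eval_index_eq univ hξ.injOn
    (degree_le_natDegree.trans_lt (Nat.cast_lt.mpr hp)) ?_ fun m _ ↦ by
      rw [heval, eval_lagrangeBasis_univ hξ]
  rw [Lagrange.degree_basis hξ.injOn (mem_univ l), card_univ, Nat.cast_lt]
  exact Nat.sub_one_lt (Fintype.card_pos_iff.mpr ⟨l⟩).ne'

theorem aderMatrix_mulVec_eval_apply {ξ : ι → ℝ} (hξ : ξ.Injective) {q : ℝ[X]}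
    (hq : q.natDegree < Fintype.card ι) (l : ι) :
    (aderMatrix ξ *ᵥ fun m ↦ q.eval (ξ m)) l = aderForm (Lagrange.basis univ ξ l) q := by
  have hq_deg : q.degree < #(univ : Finset ι) :=
    degree_le_natDegree.trans_lt (Nat.cast_lt.mpr hq)
  conv_rhs => rw [Lagrange.eq_interpolate hξ.injOn hq_deg, Lagrange.interpolate_apply]
  simp only [C_mul', map_sum, map_smul, smul_eq_mul]
  exact sum_congr rfl fun m _ ↦ mul_comm _ _

end LagrangeBasis

theorem eq_of_col_zero_eq_of_mulVec_pow_eq {R m : Type*} [CommRing R] [IsDomain R] {M : ℕ}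
    {ξ : Fin (M + 1) → R} (hξ : ξ.Injective) {A A' : Matrix m (Fin (M + 1)) R}
    (hcol : A.col 0 = A'.col 0)
    (hpow : ∀ k < M, A *ᵥ (fun j ↦ ξ j ^ k) = A' *ᵥ fun j ↦ ξ j ^ k) : A = A' := by
  have hzero (i : m) : A i 0 = A' i 0 := congrFun hcol i
  have hsucc (i : m) : (fun j : Fin M ↦ A i j.succ - A' i j.succ) = 0 := by
    refine eq_zero_of_forall_pow_sum_mul_pow_eq_zero (hξ.comp (Fin.succ_injective M)) fun k ↦ ?_
    have := congrFun (hpow k k.isLt) i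
    simpa [mulVec, dotProduct, Fin.sum_univ_succ, hzero, sub_mul, sub_eq_zero] using this
  ext i j
  cases j using Fin.cases with
  | zero => exact hzero i
  | succ j => exact sub_eq_zero.mp (congrFun (hsucc i) j)

section NodeAtZero

variable {M : ℕ} {ξ w : Fin (M + 1) → ℝ}

theorem ExactToDegree.weight_ne_zero (hw : ExactToDegree ξ w (2 * M - 1)) (hξ0 : ξ 0 = 0)
    {l : Fin (M + 1)} (hl : l ≠ 0) : w l ≠ 0 := by
  set s : Finset (Fin (M + 1)) := {0, l}ᶜ with hs
  set p : ℝ[X] := X * Lagrange.nodal s ξ ^ 2 with hp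
  have hp_deg : p.natDegree ≤ 2 * M - 1 := by
    have hs_card : #s = M + 1 - 2 := by rw [hs, card_compl, card_pair hl.symm, Fintype.card_fin]
    have hl_pos : 0 < l := Fin.pos_of_ne_zero hl
    rw [hp, natDegree_X_mul (pow_ne_zero 2 Lagrange.nodal_ne_zero), natDegree_pow,
      Lagrange.natDegree_nodal, hs_card]
    omega
  have hp_eval {m : Fin (M + 1)} (hm : m ≠ l) : p.eval (ξ m) = 0 := by
    by_cases hm0 : m = 0
    · simp [hp, hm0, hξ0]
    · simp [hp, Lagrange.eval_nodal_at_node (show m ∈ s by simp [hs, hm0, hm])]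
  have hp_pos : 0 < ∫ x in (0 : ℝ)..1, p.eval x := by
    refine integral_eval_pos one_pos
      (mul_ne_zero X_ne_zero (pow_ne_zero 2 Lagrange.nodal_ne_zero)) fun x hx ↦ ?_
    simpa [hp] using mul_nonneg hx.1 (sq_nonneg _)
  intro hwl
  refine hp_pos.ne ((hw p hp_deg).symm.trans (sum_eq_zero fun m _ ↦ ?_)).symm
  by_cases hm : m = l
  · rw [hm, hwl, zero_mul]
  · rw [hp_eval hm, mul_zero]

theorem ExactToDegree.aderMatrix_mulVec_eval (hw : ExactToDegree ξ w (2 * M - 1))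
    (hξ : ξ.Injective) (hξ0 : ξ 0 = 0) {q : ℝ[X]} (hq : q.natDegree ≤ M) :
    (aderMatrix ξ *ᵥ fun m ↦ q.eval (ξ m)) =
      Pi.single 0 (q.eval 0) + diagonal w *ᵥ fun m ↦ q.derivative.eval (ξ m) := by
  ext l
  set ψ := Lagrange.basis univ ξ l with hψ
  have hψ_eval (m) : ψ.eval (ξ m) = if l = m then 1 else 0 := eval_lagrangeBasis_univ hξ l m
  have hψ_deg : (ψ * q.derivative).natDegree ≤ 2 * M - 1 := by
    have hψM : ψ.natDegree = M := by simp [hψ, Lagrange.natDegree_basis hξ.injOn (mem_univ l)]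
    have := natDegree_mul_le (p := ψ) (q := q.derivative)
    have := natDegree_derivative_le q
    omega
  have hψ_zero : ψ.eval 0 * q.eval 0 = Pi.single (M := fun _ ↦ ℝ) 0 (q.eval 0) l := by
    rw [← hξ0, hψ_eval, Pi.single_apply, ite_mul, one_mul, zero_mul]
  rw [aderMatrix_mulVec_eval_apply hξ (by simpa [Nat.lt_succ_iff] using hq),
    aderForm_eq_eval_zero_add_integral, ← hw _ hψ_deg, hψ_zero, Pi.add_apply, mulVec_diagonal]
  simp [hψ_eval]

theorem ExactToDegree.isUnit_det_aderMatrix (hw : ExactToDegree ξ w (2 * M - 1))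
    (hξ : ξ.Injective) (hξ0 : ξ 0 = 0) : IsUnit (aderMatrix ξ).det := by
  rw [isUnit_iff_ne_zero, Ne, ← exists_mulVec_eq_zero_iff]
  rintro ⟨v, hv, hBv⟩
  set q := Lagrange.interpolate univ ξ v
  have hqv : (fun m ↦ q.eval (ξ m)) = v :=
    funext fun m ↦ Lagrange.eval_interpolate_at_node v hξ.injOn (mem_univ m)
  have hq : q ≠ 0 := by
    intro hq
    exact hv (by rw [← hqv, hq]; exact funext fun _ ↦ eval_zero)
  have hq_deg : q.degree ≤ M := by
    simpa [q] using Lagrange.degree_interpolate_le (s := univ) v hξ.injOn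
  have hB (l) : 0 = Pi.single (M := fun _ ↦ ℝ) 0 (q.eval 0) l + w l * q.derivative.eval (ξ l) := by
    have := congrFun (hw.aderMatrix_mulVec_eval hξ hξ0 (natDegree_le_of_degree_le hq_deg)) l
    rwa [hqv, hBv, Pi.add_apply, mulVec_diagonal] at this
  have hq_deriv : q.derivative = 0 := by
    refine eq_zero_of_degree_lt_of_eval_index_eq_zero (univ.erase 0) hξ.injOn ?_ ?_
    · simpa using (degree_derivative_lt hq).trans_le hq_deg
    · intro l hl
      have hl0 := ne_of_mem_erase hl
      simpa [hl0, hw.weight_ne_zero hξ0 hl0] using hB l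
  have hq_zero : q.eval 0 = 0 := by simpa [hq_deriv] using (hB 0).symm
  apply hq
  rw [eq_C_of_derivative_eq_zero hq_deriv, coeff_zero_eq_eval_zero, hq_zero, C_0]

theorem ExactToDegree.aderMatrix_mul_eq_diagonal (hw : ExactToDegree ξ w (2 * M - 1))
    (hξ : ξ.Injective) (hξ0 : ξ 0 = 0) {A : Matrix (Fin (M + 1)) (Fin (M + 1)) ℝ}
    (hA0 : ∀ i, A i 0 = w 0) (hAC : SimplifyingC ξ A M) : aderMatrix ξ * A = diagonal w := by
  refine eq_of_col_zero_eq_of_mulVec_pow_eq hξ ?_ fun k hk ↦ ?_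
  · have hcol : A.col 0 = fun m ↦ (C (w 0)).eval (ξ m) := funext fun i ↦ by simp [hA0]
    calc (aderMatrix ξ * A).col 0 = aderMatrix ξ *ᵥ A.col 0 := rfl
      _ = Pi.single 0 (w 0) := by
        rw [hcol, hw.aderMatrix_mulVec_eval hξ hξ0 (natDegree_C _ |>.trans_le M.zero_le)]
        simp [← Pi.zero_def]
      _ = (diagonal w).col 0 := by
        ext i
        by_cases hi : i = 0 <;> simp [hi]
  · set q : ℝ[X] := C (1 / ((k : ℝ) + 1)) * X ^ (k + 1) with hq
    have hq_deg : q.natDegree ≤ M := (natDegree_C_mul_X_pow_le _ _).trans hk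
    have hq_deriv : q.derivative = X ^ k := by
      have : (k : ℝ) + 1 ≠ 0 := by positivity
      rw [hq, derivative_C_mul_X_pow]
      simp [this]
    have hAq : (A *ᵥ fun j ↦ ξ j ^ k) = fun m ↦ q.eval (ξ m) := by
      ext i
      simpa [mulVec, dotProduct, hq, div_eq_inv_mul] using hAC i (k + 1) (by omega) hk
    calc (aderMatrix ξ * A) *ᵥ (fun j ↦ ξ j ^ k)
        = aderMatrix ξ *ᵥ fun m ↦ q.eval (ξ m) := by rw [← mulVec_mulVec, hAq]
      _ = diagonal w *ᵥ fun m ↦ ξ m ^ k := by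
        rw [hw.aderMatrix_mulVec_eval hξ hξ0 hq_deg, hq_deriv]
        simp [hq]

theorem ader_RK_GLB_is_lobatto_IIIC_general (hξ : ξ.Injective) (hξ0 : ξ 0 = 0)
    (hw : ExactToDegree ξ w (2 * M - 1)) {A : Matrix (Fin (M + 1)) (Fin (M + 1)) ℝ}
    (hA0 : ∀ i, A i 0 = w 0) (hAC : SimplifyingC ξ A M) : A = (aderMatrix ξ)⁻¹ * diagonal w := by
  rw [← hw.aderMatrix_mul_eq_diagonal hξ hξ0 hA0 hAC,
    nonsing_inv_mul_cancel_left _ _ (hw.isUnit_det_aderMatrix hξ hξ0)]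

end NodeAtZero

end ADER

/-- Uniqueness of the Lobatto IIIC matrix: with Gauss–Lobatto-type nodes (ξ⁰ = 0, ξᴹ = 1,
nodal quadrature exact to degree 2M−1), any matrix A' satisfying a_{i,0} = b₀ and the
simplifying condition C(M) equals the ADER Runge–Kutta matrix B⁻¹·diag(w). -/
theorem ader_RK_GLB_is_lobatto_IIIC
    (M : ℕ) (hM : 1 ≤ M)
    (ξ : Fin (M + 1) → ℝ)
    (hξ01 : ∀ m, ξ m ∈ Set.Icc (0 : ℝ) 1)
    (hξmono : StrictMono ξ)
    (ψ : Fin (M + 1) → Polynomial ℝ)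
    (hψdeg : ∀ l, (ψ l).natDegree ≤ M)
    (hψeval : ∀ l m, (ψ l).eval (ξ m) = if l = m then 1 else 0)
    (Bmat Lam : Matrix (Fin (M + 1)) (Fin (M + 1)) ℝ)
    (hB : ∀ l m, Bmat l m = (ψ l).eval 1 * (ψ m).eval 1 -
        ∫ x in (0 : ℝ)..1, (ψ l).derivative.eval x * (ψ m).eval x)
    (hLam : ∀ l m, Lam l m = ∫ x in (0 : ℝ)..1, (ψ l).eval x * (ψ m).eval x)
    (w : Fin (M + 1) → ℝ)
    (hw : ∀ m, w m = ∫ x in (0 : ℝ)..1, (ψ m).eval x)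
    (hξ0 : ξ 0 = 0) (hξM : ξ (Fin.last M) = 1)
    (hquad : ∀ p : Polynomial ℝ, p.natDegree ≤ 2 * M - 1 →
      ∑ m, w m * p.eval (ξ m) = ∫ x in (0 : ℝ)..1, p.eval x)
    (hBinv : IsUnit Bmat.det)
    (A' : Matrix (Fin (M + 1)) (Fin (M + 1)) ℝ)
    (hA'0 : ∀ i, A' i 0 = w 0)
    (hA'C : ∀ (i : Fin (M + 1)) (z : ℕ), 1 ≤ z → z ≤ M →
      ∑ j, A' i j * ξ j ^ (z - 1) = ξ i ^ z / (z : ℝ)) :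
    A' = Bmat⁻¹ * Matrix.diagonal w := by
  obtain rfl : ψ = Lagrange.basis Finset.univ ξ := funext fun l ↦
    eq_lagrangeBasis_univ hξmono.injective (by simpa [Nat.lt_succ_iff] using hψdeg l) (hψeval l)
  obtain rfl : Bmat = aderMatrix ξ := Matrix.ext hB
  exact ader_RK_GLB_is_lobatto_IIIC_general hξmono.injective hξ0 hquad hA'0 hA'C
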